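/- arXiv:1010.5769 — 2 statements merged into one kernel-verified Lean document; each statement's English description precedes it below -/
import Mathlib

section
/- For every integer k ≥ 1 and every complex number q with |q| < 1, one has (2k)! · (∏_{m=1}^∞ (1 − q^m)/(1 + q^m)) · C_k(q) = (−1)^k · ∑_{n=k}^∞ (−1)^n · 2n · ((n+k−1)!/(n−k)!) · q^{n²}. -/
/-- MacMahon's odd generalized sum-of-divisors function `C_k(q)`, defined as the sum over all
strictly increasing `k`-tuples of positive integers. -/
noncomputable def macC (k : ℕ) (q : ℂ) : ℂ :=
  ∑' m : {m : Fin k → ℕ // StrictMono m ∧ ∀ i, 0 < m i},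
    q ^ (∑ i, (2 * m.1 i - 1)) / ∏ i, (1 - q ^ (2 * m.1 i - 1)) ^ 2

open Finset Filter Topology

/-- `(q^2; q^2)_j`. -/
noncomputable def mQ (q : ℂ) (j : ℕ) : ℂ := ∏ i ∈ range j, (1 - q ^ (2 * (i + 1)))

/-- reciprocal of `(q^2;q^2)_j`, zero for negative `j`. -/
noncomputable def mR (q : ℂ) (j : ℤ) : ℂ := if j < 0 then 0 else (mQ q j.toNat)⁻¹

noncomputable def mB (q : ℂ) (N : ℕ) (n : ℤ) : ℂ :=
  mQ q (2 * N) * (mR q (N + n) * mR q (N - n)) * ((-1) ^ n * q ^ (n ^ 2))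

noncomputable def mF (x : ℂ) (k : ℕ) : ℂ := ∏ j ∈ range k, (x ^ 2 - (j : ℂ) ^ 2)

noncomputable def mD (n : ℤ) (k : ℕ) : ℂ := (-1) ^ k * mF n k / ((2 * k).factorial : ℂ)

noncomputable def mw (q : ℂ) (i : ℕ) : ℂ := q ^ (2 * i + 1) / (1 - q ^ (2 * i + 1)) ^ 2

noncomputable def me (q : ℂ) (N k : ℕ) : ℂ := ∑ S ∈ powersetCard k (range N), ∏ i ∈ S, mw q i

noncomputable def mO (q : ℂ) (N : ℕ) : ℂ := ∏ i ∈ range N, (1 - q ^ (2 * i + 1))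

lemma one_sub_pow_ne {q : ℂ} (hq : ‖q‖ < 1) {m : ℕ} (hm : m ≠ 0) : 1 - q ^ m ≠ 0 := by
  intro h
  have h1 : q ^ m = 1 := (sub_eq_zero.mp h).symm
  have h2 : ‖q‖ ^ m < 1 := pow_lt_one₀ (norm_nonneg _) hq hm
  rw [← norm_pow, h1, norm_one] at h2
  exact lt_irrefl _ h2

lemma one_add_pow_ne {q : ℂ} (hq : ‖q‖ < 1) {m : ℕ} (hm : m ≠ 0) : 1 + q ^ m ≠ 0 := by
  intro h
  have h1 : q ^ m = -1 := (eq_neg_of_add_eq_zero_right h)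
  have h2 : ‖q‖ ^ m < 1 := pow_lt_one₀ (norm_nonneg _) hq hm
  rw [← norm_pow, h1, norm_neg, norm_one] at h2
  exact lt_irrefl _ h2

lemma mQ_ne {q : ℂ} (hq : ‖q‖ < 1) (j : ℕ) : mQ q j ≠ 0 :=
  prod_ne_zero_iff.mpr fun i _ => one_sub_pow_ne hq (by omega)

lemma mR_pred {q : ℂ} (hq : ‖q‖ < 1) (j : ℤ) :
    mR q (j - 1) = (1 - q ^ (2 * j)) * mR q j := by
  rcases lt_trichotomy j 0 with h | h | h
  · simp [mR, h, show j - 1 < 0 by omega]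
  · subst h; simp [mR]
  · obtain ⟨m, rfl⟩ : ∃ m : ℕ, j = m + 1 := ⟨(j - 1).toNat, by omega⟩
    have h1 : ¬ ((m : ℤ) + 1 < 0) := by omega
    have h2 : ((m : ℤ) + 1).toNat = m + 1 := by omega
    have h3 : q ^ (2 * ((m : ℤ) + 1)) = q ^ (2 * (m + 1)) := by norm_cast
    have := mQ_ne hq m
    have := one_sub_pow_ne hq (m := 2 * (m + 1)) (by omega)
    simp only [mR, add_sub_cancel_right, h1, h2, h3, if_false, Int.toNat_natCast]
    rw [if_neg (by omega), mQ, mQ, prod_range_succ]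
    field_simp

lemma mB_rec {q : ℂ} (h0 : q ≠ 0) (hq : ‖q‖ < 1) (N : ℕ) (n : ℤ) :
    mB q (N + 1) n = (1 + (q ^ (2 * N + 1)) ^ 2) * mB q N n
      - q ^ (2 * N + 1) * (mB q N (n - 1) + mB q N (n + 1)) := by
  have a1 := mR_pred hq ((N : ℤ) + 1 + n)
  have a2 := mR_pred hq ((N : ℤ) + n)
  have b1 := mR_pred hq ((N : ℤ) + 1 - n)
  have b2 := mR_pred hq ((N : ℤ) - n)
  have e1 : (N : ℤ) + 1 + n - 1 = N + n := by ring
  have e2 : (N : ℤ) + 1 - n - 1 = N - n := by ring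
  rw [e1] at a1
  rw [e2] at b1
  rw [a1] at a2
  rw [b1] at b2
  have f1 : (N : ℤ) + (n + 1) = N + 1 + n := by ring
  have f2 : (N : ℤ) + (n - 1) = N + n - 1 := by ring
  have f3 : (N : ℤ) - (n + 1) = N - n - 1 := by ring
  have f4 : (N : ℤ) - (n - 1) = N + 1 - n := by ring
  have g : mQ q (2 * (N + 1)) =
      mQ q (2 * N) * (1 - q ^ (2 * (2 * N + 1))) * (1 - q ^ (2 * (2 * N + 2))) := by
    rw [mQ, mQ, show 2 * (N + 1) = 2 * N + 1 + 1 by ring, prod_range_succ, prod_range_succ]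
  simp only [mB, Nat.cast_add, Nat.cast_one, f1, f2, f3, f4, a2, b2, a1, b1, g]
  generalize mR q (N + 1 + n) = r
  generalize mR q (N + 1 - n) = s
  have hm : (-1 : ℂ) ≠ 0 := by norm_num
  have k1 : q ^ ((n + 1) ^ 2) = q ^ (n ^ 2) * (q ^ n) ^ 2 * q := by
    rw [show (n + 1) ^ 2 = n ^ 2 + n * 2 + 1 by ring, zpow_add₀ h0, zpow_add₀ h0, zpow_mul]; simp
  have k2 : q ^ ((n - 1) ^ 2) = q ^ (n ^ 2) * ((q ^ n) ^ 2)⁻¹ * q := by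
    rw [show (n - 1) ^ 2 = n ^ 2 - n * 2 + 1 by ring, zpow_add₀ h0, zpow_sub₀ h0, zpow_mul]; simp
    left; rw [div_eq_mul_inv]
  have k3 : q ^ (2 * ((N : ℤ) + 1 + n)) = (q ^ N) ^ 2 * q ^ 2 * (q ^ n) ^ 2 := by
    rw [show 2 * ((N : ℤ) + 1 + n) = N * 2 + 2 + n * 2 by ring, zpow_add₀ h0, zpow_add₀ h0,
      zpow_mul, zpow_mul]; norm_cast
  have k4 : q ^ (2 * ((N : ℤ) + 1 - n)) = (q ^ N) ^ 2 * q ^ 2 * ((q ^ n) ^ 2)⁻¹ := by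
    rw [show 2 * ((N : ℤ) + 1 - n) = N * 2 + 2 - n * 2 by ring, zpow_sub₀ h0, zpow_add₀ h0,
      zpow_mul, zpow_mul, div_eq_mul_inv]; norm_cast
  have k5 : q ^ (2 * ((N : ℤ) + n)) = (q ^ N) ^ 2 * (q ^ n) ^ 2 := by
    rw [show 2 * ((N : ℤ) + n) = N * 2 + n * 2 by ring, zpow_add₀ h0,
      zpow_mul, zpow_mul]; norm_cast
  have k6 : q ^ (2 * ((N : ℤ) - n)) = (q ^ N) ^ 2 * ((q ^ n) ^ 2)⁻¹ := by
    rw [show 2 * ((N : ℤ) - n) = N * 2 - n * 2 by ring, zpow_sub₀ h0,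
      zpow_mul, zpow_mul, div_eq_mul_inv]; norm_cast
  have k7 : (-1 : ℂ) ^ (n + 1) = - (-1) ^ n := by rw [zpow_add₀ hm]; simp
  have k8 : (-1 : ℂ) ^ (n - 1) = - (-1) ^ n := by rw [zpow_sub₀ hm]; simp [div_neg]
  rw [k1, k2, k3, k4, k5, k6, k7, k8]
  have hz : q ^ n ≠ 0 := zpow_ne_zero _ h0
  generalize (-1 : ℂ) ^ n = u
  generalize q ^ (n ^ 2) = v
  generalize q ^ n = z at *
  generalize mQ q (2 * N) = w
  have l1 : q ^ (2 * N + 1) = (q ^ N) ^ 2 * q := by ring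
  have l2 : q ^ (2 * (2 * N + 1)) = (q ^ N) ^ 4 * q ^ 2 := by ring
  have l3 : q ^ (2 * (2 * N + 2)) = (q ^ N) ^ 4 * q ^ 4 := by ring
  rw [l1, l2, l3]
  generalize q ^ N = y
  field_simp
  ring

lemma mF_succ (x : ℂ) (k : ℕ) : mF x (k + 1) = mF x k * (x ^ 2 - (k : ℂ) ^ 2) := by
  rw [mF, prod_range_succ, mF]

lemma mF_aux (x : ℂ) (k : ℕ) : ∃ G : ℂ, mF x (k + 1) = x * G ∧
    mF (x + 1) (k + 2) = (x + 1) * (x + k + 1) * (x + k + 2) * G ∧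
    mF (x - 1) (k + 2) = (x - 1) * (x - k - 1) * (x - k - 2) * G := by
  induction k with
  | zero => exact ⟨x, by simp [mF]; ring, by simp [mF, prod_range_succ]; ring,
      by simp [mF, prod_range_succ]; ring⟩
  | succ k ih =>
    obtain ⟨G, h1, h2, h3⟩ := ih
    refine ⟨G * (x ^ 2 - (k + 1) ^ 2), ?_, ?_, ?_⟩
    · rw [mF_succ, h1]; push_cast; ring
    · rw [mF_succ, h2]; push_cast; ring
    · rw [mF_succ, h3]; push_cast; ring

lemma mF_rec (x : ℂ) (k : ℕ) : mF (x + 1) (k + 1) + mF (x - 1) (k + 1) =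
    2 * mF x (k + 1) + (2 * k + 2) * (2 * k + 1) * mF x k := by
  cases k with
  | zero => simp [mF]; ring
  | succ k =>
    obtain ⟨G, h1, h2, h3⟩ := mF_aux x k
    rw [h2, h3, mF_succ x (k + 1), h1]; push_cast; ring

lemma mD_rec (n : ℤ) (k : ℕ) : mD (n + 1) (k + 1) + mD (n - 1) (k + 1) =
    2 * mD n (k + 1) - mD n k := by
  have h := mF_rec n k
  have hf : ((2 * k).factorial : ℂ) ≠ 0 := by exact_mod_cast Nat.factorial_ne_zero _
  have hg : ((2 * (k + 1)).factorial : ℂ) = (2 * k + 2) * (2 * k + 1) * (2 * k).factorial := by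
    rw [show 2 * (k + 1) = 2 * k + 1 + 1 by ring, Nat.factorial_succ, Nat.factorial_succ]
    push_cast; ring
  have h1 : (2 * (k : ℂ) + 2) ≠ 0 := by norm_cast
  have h2 : (2 * (k : ℂ) + 1) ≠ 0 := by norm_cast
  simp only [mD, hg]
  push_cast
  field_simp
  rw [pow_succ]
  linear_combination (-(-1) ^ k) * h

lemma me_succ (q : ℂ) (N k : ℕ) : me q (N + 1) (k + 1) = me q N (k + 1) + mw q N * me q N k := by
  have hN : N ∉ range N := by simp
  rw [me, range_add_one, powersetCard_succ_insert hN, sum_union, sum_image, me, me, mul_sum]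
  · congr 1
    refine sum_congr rfl fun S hS => prod_insert ?_
    exact fun h => hN ((mem_powersetCard.mp hS).1 h)
  · intro S hS T hT h
    have hS' : N ∉ S := fun h => hN ((mem_powersetCard.mp hS).1 h)
    have hT' : N ∉ T := fun h => hN ((mem_powersetCard.mp hT).1 h)
    have := congrArg (fun U => U.erase N) h
    simpa [hS', hT'] using this
  · rw [Finset.disjoint_left]
    intro S hS hS'
    obtain ⟨T, _, rfl⟩ := mem_image.mp hS'
    exact hN ((mem_powersetCard.mp hS).1 (mem_insert_self _ _))

lemma mB_supp (q : ℂ) (N : ℕ) (n : ℤ) (h : n ∉ Set.Icc (-(N : ℤ)) N) : mB q N n = 0 := by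
  have : (N : ℤ) + n < 0 ∨ (N : ℤ) - n < 0 := by
    simp only [Set.mem_Icc, not_and_or] at h; omega
  rcases this with h | h <;> simp [mB, mR, h]

lemma mB_summable (q : ℂ) (N : ℕ) (f : ℤ → ℂ) : Summable fun n => mB q N n * f n := by
  apply summable_of_ne_finset_zero (s := Finset.Icc (-(N : ℤ)) N)
  intro n hn
  rw [mB_supp q N n (by simpa using hn), zero_mul]

lemma mB_shift (q : ℂ) (N : ℕ) (f : ℤ → ℂ) :
    ∑' n : ℤ, (mB q N (n - 1) + mB q N (n + 1)) * f n =
      ∑' n : ℤ, mB q N n * (f (n + 1) + f (n - 1)) := by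
  have h1 := (Equiv.subRight (1 : ℤ)).tsum_eq (fun n => mB q N n * f (n + 1))
  have h2 := (Equiv.addRight (1 : ℤ)).tsum_eq (fun n => mB q N n * f (n - 1))
  have s1 := (Equiv.subRight (1 : ℤ)).summable_iff.mpr (mB_summable q N (fun n => f (n + 1)))
  have s2 := (Equiv.addRight (1 : ℤ)).summable_iff.mpr (mB_summable q N (fun n => f (n - 1)))
  simp only [Function.comp_def, Equiv.subRight_apply, Equiv.coe_addRight, sub_add_cancel,
    add_sub_cancel_right] at h1 h2 s1 s2
  simp only [add_mul, mul_add]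
  rw [s1.tsum_add s2, h1, h2, ← (mB_summable q N _).tsum_add (mB_summable q N _)]

lemma mB_tsum {q : ℂ} (h0 : q ≠ 0) (hq : ‖q‖ < 1) (N k : ℕ) :
    ∑' n : ℤ, mB q N n * mD n k = mO q N ^ 2 * me q N k := by
  induction N generalizing k with
  | zero =>
    rw [tsum_eq_single 0]
    · cases k with
      | zero => simp [mB, mD, mO, me, mQ, mR, mF]
      | succ k => 
        have : powersetCard (k + 1) (∅ : Finset ℕ) = ∅ := powersetCard_eq_empty.mpr (by simp)
        simp [mD, mF, me, prod_range_succ', this]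
    · intro n hn
      rw [mB_supp, zero_mul]
      simpa using hn
  | succ N ih =>
    have key : ∀ f : ℤ → ℂ, ∑' n : ℤ, mB q (N + 1) n * f n =
        ∑' n : ℤ, mB q N n * ((1 + (q ^ (2 * N + 1)) ^ 2) * f n
          - q ^ (2 * N + 1) * (f (n + 1) + f (n - 1))) := by
      intro f
      have hs : Summable fun n : ℤ => (mB q N (n - 1) + mB q N (n + 1)) * f n := by
        have s1 := (Equiv.subRight (1 : ℤ)).summable_iff.mpr (mB_summable q N (fun n => f (n + 1)))
        have s2 := (Equiv.addRight (1 : ℤ)).summable_iff.mpr (mB_summable q N (fun n => f (n - 1)))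
        simp only [Function.comp_def, Equiv.subRight_apply, Equiv.coe_addRight, sub_add_cancel,
          add_sub_cancel_right] at s1 s2
        simpa only [add_mul] using s1.add s2
      have e1 : ∀ n, mB q (N + 1) n * f n = (1 + (q ^ (2 * N + 1)) ^ 2) * (mB q N n * f n)
          - q ^ (2 * N + 1) * ((mB q N (n - 1) + mB q N (n + 1)) * f n) := by
        intro n; rw [mB_rec h0 hq]; ring
      have e2 : ∀ n, mB q N n * ((1 + (q ^ (2 * N + 1)) ^ 2) * f n
          - q ^ (2 * N + 1) * (f (n + 1) + f (n - 1))) =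
          (1 + (q ^ (2 * N + 1)) ^ 2) * (mB q N n * f n)
          - q ^ (2 * N + 1) * (mB q N n * (f (n + 1) + f (n - 1))) := by
        intro n; ring
      rw [tsum_congr e1, tsum_congr e2, ((mB_summable q N f).mul_left _).tsum_sub (hs.mul_left _),
        ((mB_summable q N f).mul_left _).tsum_sub ((mB_summable q N _).mul_left _),
        tsum_mul_left, tsum_mul_left, tsum_mul_left, mB_shift]
    rw [key]
    have hO : mO q (N + 1) = mO q N * (1 - q ^ (2 * N + 1)) := by rw [mO, prod_range_succ, mO]
    cases k with
    | zero =>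
      have i0 := ih 0
      have : ∀ n : ℤ, mB q N n * ((1 + (q ^ (2 * N + 1)) ^ 2) * mD n 0
          - q ^ (2 * N + 1) * (mD (n + 1) 0 + mD (n - 1) 0)) =
          (1 - q ^ (2 * N + 1)) ^ 2 * (mB q N n * mD n 0) := by
        intro n; simp [mD, mF]; ring
      rw [tsum_congr this, tsum_mul_left, i0, hO]
      simp [me]; ring
    | succ k =>
      have i0 := ih k
      have i1 := ih (k + 1)
      have : ∀ n : ℤ, mB q N n * ((1 + (q ^ (2 * N + 1)) ^ 2) * mD n (k + 1)
          - q ^ (2 * N + 1) * (mD (n + 1) (k + 1) + mD (n - 1) (k + 1))) =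
          (1 - q ^ (2 * N + 1)) ^ 2 * (mB q N n * mD n (k + 1)) +
          q ^ (2 * N + 1) * (mB q N n * mD n k) := by
        intro n; rw [mD_rec]; ring
      rw [tsum_congr this, ((mB_summable q N _).mul_left _).tsum_add
        ((mB_summable q N _).mul_left _), tsum_mul_left, tsum_mul_left, i0, i1, hO, me_succ]
      have hw : (1 - q ^ (2 * N + 1)) ^ 2 * mw q N = q ^ (2 * N + 1) := by
        have := one_sub_pow_ne hq (m := 2 * N + 1) (by omega)
        rw [mw]; field_simp
      linear_combination (-(mO q N ^ 2 * me q N k)) * hw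

lemma prod_one_sub_split (q : ℂ) (N : ℕ) :
    ∏ m ∈ range (2 * N), (1 - q ^ (m + 1)) = mQ q N * mO q N := by
  induction N with
  | zero => simp [mQ, mO]
  | succ N ih =>
    rw [show 2 * (N + 1) = 2 * N + 1 + 1 by ring, prod_range_succ, prod_range_succ, ih, mQ, mQ,
      mO, mO, prod_range_succ, prod_range_succ]
    ring

lemma gauss_fin {q : ℂ} (hq : ‖q‖ < 1) (N : ℕ) :
    ∏ m ∈ range (2 * N), ((1 - q ^ (m + 1)) / (1 + q ^ (m + 1))) =
      mQ q N ^ 2 * mO q N ^ 2 / mQ q (2 * N) := by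
  have h2 : (∏ m ∈ range (2 * N), (1 + q ^ (m + 1))) * ∏ m ∈ range (2 * N), (1 - q ^ (m + 1))
      = mQ q (2 * N) := by
    rw [← prod_mul_distrib, mQ]
    exact prod_congr rfl fun i _ => by ring
  have h3 : ∏ m ∈ range (2 * N), (1 + q ^ (m + 1)) ≠ 0 :=
    prod_ne_zero_iff.mpr fun i _ => one_add_pow_ne hq (by omega)
  rw [prod_div_distrib, div_eq_div_iff h3 (mQ_ne hq _), ← h2, prod_one_sub_split]
  ring

lemma mQ_tendsto {q : ℂ} (hq : ‖q‖ < 1) : ∃ P : ℂ, P ≠ 0 ∧ Tendsto (mQ q) atTop (𝓝 P) := by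
  have hq2 : ‖q ^ 2‖ < 1 := by
    rw [norm_pow]; exact pow_lt_one₀ (norm_nonneg _) hq (by norm_num)
  have hs : Summable fun n : ℕ => ‖-(q ^ (2 * (n + 1)))‖ := by
    have := (summable_nat_add_iff 1).mpr (summable_geometric_of_lt_one (norm_nonneg _) hq2)
    simpa [pow_mul] using this
  refine ⟨∏' n : ℕ, (1 + -(q ^ (2 * (n + 1)))), ?_, ?_⟩
  · apply tprod_one_add_ne_zero_of_summable _ hs
    intro i
    rw [← sub_eq_add_neg]
    exact one_sub_pow_ne hq (by omega)
  · have := (multipliable_one_add_of_summable hs).hasProd.tendsto_prod_nat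
    simp only [← sub_eq_add_neg] at this ⊢
    exact this

lemma mR_bound {q : ℂ} (hq : ‖q‖ < 1) : ∃ C : ℝ, 0 ≤ C ∧ ∀ j, ‖mR q j‖ ≤ C := by
  obtain ⟨P, hP, hT⟩ := mQ_tendsto hq
  obtain ⟨C, hC⟩ := (Metric.isBounded_range_of_tendsto _ (hT.inv₀ hP)).exists_norm_le
  have hC0 : 0 ≤ C := (norm_nonneg _).trans (hC _ ⟨0, rfl⟩)
  refine ⟨C, hC0, fun j => ?_⟩
  unfold mR
  split_ifs
  · simpa
  · exact hC _ ⟨j.toNat, rfl⟩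

lemma mR_tendsto {q : ℂ} {P : ℂ} (hP : P ≠ 0) (hT : Tendsto (mQ q) atTop (𝓝 P)) (n : ℤ) :
    Tendsto (fun N : ℕ => mR q (N + n)) atTop (𝓝 P⁻¹) := by
  have h1 : Tendsto (fun N : ℕ => ((N : ℤ) + n).toNat) atTop atTop := by
    refine tendsto_atTop.mpr fun b => ?_
    filter_upwards [eventually_ge_atTop (b + n.natAbs)] with N hN
    omega
  refine ((hT.inv₀ hP).comp h1).congr' ?_
  filter_upwards [eventually_ge_atTop n.natAbs] with N hN
  simp only [Function.comp_def, mR]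
  rw [if_neg (by omega)]

lemma mD_neg (n : ℤ) (k : ℕ) : mD (-n) k = mD n k := by
  simp [mD, mF]

noncomputable def mg (q : ℂ) (k : ℕ) (n : ℤ) : ℂ := (-1) ^ n * q ^ (n ^ 2) * mD n k

lemma mg_neg (q : ℂ) (k : ℕ) (n : ℤ) : mg q k (-n) = mg q k n := by
  simp only [mg, mD_neg, neg_sq, zpow_neg]
  rw [← inv_zpow, inv_neg_one]

lemma mg_summable_nat {q : ℂ} (h0 : q ≠ 0) (hq : ‖q‖ < 1) (k : ℕ) :
    Summable fun n : ℕ => ‖mg q k n‖ := by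
  have hr : ‖(‖q‖)‖ < 1 := by simpa
  have h1 : Summable fun n : ℕ => ((n + k : ℕ) : ℝ) ^ (2 * k) * ‖q‖ ^ (n + k) :=
    (summable_nat_add_iff (f := fun n : ℕ => (n : ℝ) ^ (2 * k) * ‖q‖ ^ n) k).mpr
      (summable_pow_mul_geometric_of_norm_lt_one (2 * k) hr)
  have h2 := h1.mul_left ((‖q‖ ^ k)⁻¹)
  refine h2.of_nonneg_of_le (fun _ => norm_nonneg _) fun n => ?_
  have hq0 : 0 < ‖q‖ := norm_pos_iff.mpr h0
  have e : (‖q‖ ^ k)⁻¹ * (((n + k : ℕ) : ℝ) ^ (2 * k) * ‖q‖ ^ (n + k)) =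
      ‖q‖ ^ n * ((n + k : ℕ) : ℝ) ^ (2 * k) := by
    rw [pow_add]; field_simp
  rw [e, mg, norm_mul]
  refine mul_le_mul ?_ ?_ (norm_nonneg _) (by positivity)
  · rw [norm_mul, norm_zpow, norm_neg, norm_one, one_zpow, one_mul, norm_zpow]
    have : ‖q‖ ^ ((n : ℤ) ^ 2) = ‖q‖ ^ (n ^ 2) := by norm_cast
    rw [this]
    exact pow_le_pow_of_le_one hq0.le hq.le (Nat.le_self_pow (by norm_num) n)
  · rw [mD, norm_div, norm_mul, norm_pow, norm_neg, norm_one, one_pow, one_mul, Complex.norm_natCast]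
    have hf : (1 : ℝ) ≤ ((2 * k).factorial : ℝ) := by
      exact Nat.one_le_cast.mpr (Nat.factorial_pos _)
    refine (div_le_self (norm_nonneg _) hf).trans ?_
    rw [mF, norm_prod, pow_mul]
    have : ∀ j ∈ range k, ‖(((n : ℤ) : ℂ)) ^ 2 - (j : ℂ) ^ 2‖ ≤ (((n + k : ℕ) : ℝ) ^ 2) := by
      intro j hj
      have hj' : (j : ℝ) ≤ k := by exact_mod_cast (mem_range.mp hj).le
      refine (norm_sub_le _ _).trans ?_
      simp only [Int.cast_natCast, norm_pow, Complex.norm_natCast]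
      push_cast
      have : (0 : ℝ) ≤ n := by positivity
      have : (0 : ℝ) ≤ j := by positivity
      nlinarith
    refine (prod_le_prod (fun _ _ => norm_nonneg _) this).trans ?_
    simp

lemma mg_summable {q : ℂ} (h0 : q ≠ 0) (hq : ‖q‖ < 1) (k : ℕ) :
    Summable fun n : ℤ => ‖mg q k n‖ := by
  have h := mg_summable_nat h0 hq k
  refine Summable.of_nat_of_neg h ?_
  simpa only [mg_neg] using h

lemma main_tendsto {q : ℂ} (h0 : q ≠ 0) (hq : ‖q‖ < 1) (k : ℕ) :
    Tendsto (fun N : ℕ => (∏ m ∈ range (2 * N), ((1 - q ^ (m + 1)) / (1 + q ^ (m + 1)))) * me q N k)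
      atTop (𝓝 (∑' n : ℤ, mg q k n)) := by
  have e : ∀ N : ℕ,
      ∑' n : ℤ, mQ q N ^ 2 * (mR q (N + n) * mR q (N - n)) * mg q k n =
      (∏ m ∈ range (2 * N), ((1 - q ^ (m + 1)) / (1 + q ^ (m + 1)))) * me q N k := by
    intro N
    have h1 := mB_tsum h0 hq N k
    have h2 : ∀ n : ℤ, mQ q N ^ 2 * (mR q (N + n) * mR q (N - n)) * mg q k n =
        mQ q N ^ 2 / mQ q (2 * N) * (mB q N n * mD n k) := by
      intro n
      have := mQ_ne hq (2 * N)
      rw [mB, mg]; field_simp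
    rw [tsum_congr h2, tsum_mul_left, h1, gauss_fin hq]
    ring
  refine Tendsto.congr e ?_
  obtain ⟨P, hP, hT⟩ := mQ_tendsto hq
  obtain ⟨C, hC0, hC⟩ := mR_bound hq
  obtain ⟨K, hK⟩ := (Metric.isBounded_range_of_tendsto _ hT).exists_norm_le
  have hK0 : 0 ≤ K := (norm_nonneg _).trans (hK _ ⟨0, rfl⟩)
  refine tendsto_tsum_of_dominated_convergence (bound := fun n => K ^ 2 * (C * C) * ‖mg q k n‖)
    ((mg_summable h0 hq k).mul_left _) (fun n => ?_) (Eventually.of_forall fun N n => ?_)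
  · have t := (((hT.pow 2).mul ((mR_tendsto hP hT n).mul (mR_tendsto hP hT (-n)))).mul_const
      (mg q k n))
    have : P ^ 2 * (P⁻¹ * P⁻¹) * mg q k n = mg q k n := by field_simp
    rw [this] at t
    simpa only [← sub_eq_add_neg] using t
  · rw [norm_mul, norm_mul, norm_mul, norm_pow]
    gcongr
    · exact hK _ ⟨N, rfl⟩
    · exact hC _
    · exact hC _

lemma mF_zero (n k : ℕ) (h : n < k) : mF n k = 0 := by
  rw [mF]
  exact prod_eq_zero (mem_range.mpr h) (by simp)

lemma mF_fact (n k : ℕ) (h : k + 1 ≤ n) :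
    mF n (k + 1) * ((n - (k + 1)).factorial : ℂ) = n * ((n + (k + 1) - 1).factorial : ℂ) := by
  induction k with
  | zero =>
    obtain ⟨m, rfl⟩ : ∃ m, n = m + 1 := ⟨n - 1, by omega⟩
    simp [mF, Nat.factorial_succ]; ring
  | succ k ih =>
    have ih := ih (by omega)
    obtain ⟨d, rfl⟩ : ∃ d, n = k + 1 + 1 + d := ⟨n - (k + 1 + 1), by omega⟩
    have e1 : k + 1 + 1 + d - (k + 1) = d + 1 := by omega
    have e2 : k + 1 + 1 + d - (k + 1 + 1) = d := by omega
    have e3 : k + 1 + 1 + d + (k + 1) - 1 = k + 1 + 1 + d + k := by omega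
    have e4 : k + 1 + 1 + d + (k + 1 + 1) - 1 = k + 1 + 1 + d + k + 1 := by omega
    rw [e1, e3, Nat.factorial_succ] at ih
    rw [e2, e4, mF_succ, Nat.factorial_succ]
    push_cast at ih ⊢
    linear_combination (2 * (k : ℂ) + 3 + d) * ih

lemma mg_tsum {q : ℂ} (h0 : q ≠ 0) (hq : ‖q‖ < 1) (k : ℕ) (hk : 1 ≤ k) :
    ((2 * k).factorial : ℂ) * ∑' n : ℤ, mg q k n =
    (-1) ^ k * ∑' n : {n : ℕ // k ≤ n},
        (-1) ^ (n : ℕ) * (2 * (n : ℕ)) *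
          ((((n : ℕ) + k - 1).factorial : ℂ) / (((n : ℕ) - k).factorial : ℂ)) *
            q ^ ((n : ℕ) ^ 2) := by
  have hs := (mg_summable_nat h0 hq k).of_norm.hasSum
  have hs' : HasSum (fun n : ℕ => mg q k (-n)) (∑' n : ℕ, mg q k n) := by
    simpa only [mg_neg] using hs
  have hz : ∀ n : ℕ, n < k → mg q k n = 0 := by
    intro n hn
    have := mF_zero n k hn
    simp [mg, mD, this]
  have h1 := (HasSum.of_nat_of_neg hs hs').tsum_eq
  have hz0 : mg q k 0 = 0 := by simpa using hz 0 (by omega)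
  rw [hz0, sub_zero] at h1
  have h2 : ∑' n : {n : ℕ // k ≤ n}, mg q k ((n : ℕ) : ℤ) = ∑' n : ℕ, mg q k n := by
    refine tsum_subtype_eq_of_support_subset (s := {n : ℕ | k ≤ n})
      (f := fun n : ℕ => mg q k n) ?_
    intro n hn
    by_contra h
    exact hn (hz n (by simpa using h))
  rw [h1, ← h2, ← two_mul, ← tsum_mul_left, ← tsum_mul_left, ← tsum_mul_left]
  refine tsum_congr fun ⟨n, hn⟩ => ?_
  obtain ⟨j, rfl⟩ : ∃ j, k = j + 1 := ⟨k - 1, by omega⟩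
  have hf := mF_fact n j hn
  have f1 : ((2 * (j + 1)).factorial : ℂ) ≠ 0 := by exact_mod_cast Nat.factorial_ne_zero _
  have f2 : ((n - (j + 1)).factorial : ℂ) ≠ 0 := by exact_mod_cast Nat.factorial_ne_zero _
  have hf' : mF n (j + 1) = n * ((n + (j + 1) - 1).factorial : ℂ) / ((n - (j + 1)).factorial : ℂ) := by
    rw [eq_div_iff f2, hf]
  have z1 : q ^ ((n : ℤ) ^ 2) = q ^ (n ^ 2) := by norm_cast
  simp only [mg, mD, Int.cast_natCast, hf', z1, zpow_natCast]
  field_simp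

lemma mw_summable {q : ℂ} (hq : ‖q‖ < 1) : Summable fun i => ‖mw q i‖ := by
  have h1 : Summable fun i : ℕ => (((1 - ‖q‖) ^ 2)⁻¹) * ‖q‖ ^ i :=
    (summable_geometric_of_lt_one (norm_nonneg _) hq).mul_left _
  refine h1.of_nonneg_of_le (fun _ => norm_nonneg _) fun i => ?_
  have hp : 0 < 1 - ‖q‖ := by linarith
  rw [mw, norm_div, norm_pow, norm_pow, div_eq_inv_mul]
  refine mul_le_mul ?_ ?_ (by positivity) (by positivity)
  · apply inv_anti₀ (by positivity)
    gcongr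
    have h2 : ‖q ^ (2 * i + 1)‖ ≤ ‖q‖ := by
      rw [norm_pow]
      exact pow_le_of_le_one (norm_nonneg _) hq.le (by omega)
    have h3 := norm_sub_norm_le (1 : ℂ) (q ^ (2 * i + 1))
    rw [norm_one] at h3
    linarith
  · exact pow_le_pow_of_le_one (norm_nonneg _) hq.le (by omega)

lemma macC_eq (q : ℂ) (k : ℕ) :
    macC k q = ∑' S : {S : Finset ℕ // S.card = k}, ∏ i ∈ S.1, mw q i := by
  let g : {m : Fin k → ℕ // StrictMono m ∧ ∀ i, 0 < m i} → {S : Finset ℕ // S.card = k} :=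
    fun m => ⟨univ.image (fun i => m.1 i - 1), by
      rw [card_image_of_injective]
      · simp
      · intro i j h
        have h1 := m.2.2 i
        have h2 := m.2.2 j
        exact m.2.1.injective (by simp only at h; omega)⟩
  have hsm : ∀ m : {m : Fin k → ℕ // StrictMono m ∧ ∀ i, 0 < m i},
      StrictMono (fun i => m.1 i - 1) := by
    intro m i j h
    have h1 := m.2.2 i
    have h3 := m.2.1 h
    simp only; omega
  have hg : Function.Bijective g := by
    constructor
    · intro m m' h
      have hr : Set.range (fun i => m.1 i - 1) = Set.range (fun i => m'.1 i - 1) := by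
        have := congrArg (fun S => (S.1 : Set ℕ)) h
        simpa [g] using this
      have := (StrictMono.range_inj (hsm m) (hsm m')).mp hr
      apply Subtype.ext
      funext i
      have h0 := congrFun this i
      have h1 := m.2.2 i
      have h2 := m'.2.2 i
      omega
    · intro S
      refine ⟨⟨fun i => S.1.orderEmbOfFin S.2 i + 1, ?_, fun i => Nat.succ_pos _⟩, ?_⟩
      · intro i j h
        have := (S.1.orderEmbOfFin S.2).strictMono h
        simp only; omega
      · apply Subtype.ext
        simp only [g, add_tsub_cancel_right]
        apply Finset.coe_injective
        simp
  rw [macC, ← (Equiv.ofBijective g hg).tsum_eq]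
  refine tsum_congr fun m => ?_
  have : ∏ i ∈ (g m).1, mw q i = ∏ i, mw q (m.1 i - 1) :=
    prod_image fun i _ j _ h => (hsm m).injective h
  simp only [Equiv.ofBijective_apply]
  rw [this, ← prod_pow_eq_pow_sum, ← prod_div_distrib]
  refine prod_congr rfl fun i _ => ?_
  have h1 := m.2.2 i
  rw [mw, show 2 * (m.1 i - 1) + 1 = 2 * m.1 i - 1 by omega]

lemma me_tendsto {q : ℂ} (hq : ‖q‖ < 1) (k : ℕ) :
    Tendsto (fun N => me q N k) atTop (𝓝 (macC k q)) := by
  rw [macC_eq]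
  have hs := (summable_finsetProd_of_summable_norm (mw_summable hq))
  have hs' : Summable fun S : {S : Finset ℕ // S.card = k} => ∏ i ∈ S.1, mw q i :=
    hs.comp_injective Subtype.val_injective
  have ht : Tendsto (fun N : ℕ => (powersetCard k (range N)).subtype (fun S => S.card = k))
      atTop atTop := by
    refine tendsto_atTop_finset_of_monotone ?_ ?_
    · intro N M h S hS
      simp only [mem_subtype, mem_powersetCard] at hS ⊢
      exact ⟨hS.1.trans (range_subset_range.mpr h), hS.2⟩
    · intro S
      refine ⟨S.1.sup id + 1, ?_⟩
      simp only [mem_subtype, mem_powersetCard]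
      refine ⟨fun i hi => mem_range.mpr (Nat.lt_succ_of_le (le_sup (f := id) hi)), S.2⟩
  refine (hs'.hasSum.comp ht).congr fun N => ?_
  simp only [Function.comp_def, me]
  rw [sum_subtype_eq_sum_filter (f := fun S : Finset ℕ => ∏ i ∈ S, mw q i), filter_true_of_mem]
  intro S hS
  exact (mem_powersetCard.mp hS).2

lemma prod_tendsto {q : ℂ} (hq : ‖q‖ < 1) :
    Tendsto (fun N : ℕ => ∏ m ∈ range (2 * N), ((1 - q ^ (m + 1)) / (1 + q ^ (m + 1)))) atTop
      (𝓝 (∏' m : ℕ, (1 - q ^ (m + 1)) / (1 + q ^ (m + 1)))) := by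
  have hm : Multipliable fun m : ℕ => (1 - q ^ (m + 1)) / (1 + q ^ (m + 1)) := by
    have e : ∀ m : ℕ, (1 - q ^ (m + 1)) / (1 + q ^ (m + 1)) =
        1 + (-2 * q ^ (m + 1) / (1 + q ^ (m + 1))) := by
      intro m
      have := one_add_pow_ne hq (m := m + 1) (by omega)
      field_simp; ring
    simp only [e]
    apply multipliable_one_add_of_summable
    have h1 : Summable fun i : ℕ => (2 * (1 - ‖q‖)⁻¹) * ‖q‖ ^ i :=
      (summable_geometric_of_lt_one (norm_nonneg _) hq).mul_left _
    refine h1.of_nonneg_of_le (fun _ => norm_nonneg _) fun i => ?_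
    have hp : 0 < 1 - ‖q‖ := by linarith
    have h2 : ‖q ^ (i + 1)‖ ≤ ‖q‖ := by
      rw [norm_pow]
      exact pow_le_of_le_one (norm_nonneg _) hq.le (by omega)
    have h3 := norm_sub_norm_le (1 : ℂ) (-q ^ (i + 1))
    rw [norm_one, norm_neg, sub_neg_eq_add] at h3
    have h4 : ‖q ^ (i + 1)‖ ≤ ‖q‖ ^ i := by
      rw [norm_pow]
      exact pow_le_pow_of_le_one (norm_nonneg _) hq.le (by omega)
    have h5 : ‖1 + q ^ (i + 1)‖⁻¹ ≤ (1 - ‖q‖)⁻¹ := inv_anti₀ hp (by linarith)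
    rw [norm_div, norm_mul, norm_neg, Complex.norm_ofNat, div_eq_mul_inv]
    calc 2 * ‖q ^ (i + 1)‖ * ‖1 + q ^ (i + 1)‖⁻¹ ≤ 2 * ‖q‖ ^ i * (1 - ‖q‖)⁻¹ := by gcongr
      _ = _ := by ring
  exact hm.hasProd.tendsto_prod_nat.comp
    (tendsto_id.const_mul_atTop' (by norm_num : (0 : ℕ) < 2))

theorem stmt3 (k : ℕ) (hk : 1 ≤ k) (q : ℂ) (hq : ‖q‖ < 1) :
    ((2 * k).factorial : ℂ) * (∏' m : ℕ, (1 - q ^ (m + 1)) / (1 + q ^ (m + 1))) * macC k q =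
      (-1) ^ k * ∑' n : {n : ℕ // k ≤ n},
        (-1) ^ (n : ℕ) * (2 * (n : ℕ)) *
          ((((n : ℕ) + k - 1).factorial : ℂ) / (((n : ℕ) - k).factorial : ℂ)) *
            q ^ ((n : ℕ) ^ 2) := by
  by_cases h0 : q = 0
  · subst h0
    have h1 : macC k 0 = 0 := by
      rw [macC_eq]
      refine (tsum_congr fun S => ?_).trans tsum_zero
      obtain ⟨i, hi⟩ : S.1.Nonempty := card_pos.mp (by rw [S.2]; omega)
      exact prod_eq_zero hi (by simp [mw])
    rw [h1, mul_zero]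
    symm
    refine mul_eq_zero_of_right _ ((tsum_congr fun n => ?_).trans tsum_zero)
    have := n.2
    rw [zero_pow (pow_ne_zero 2 (by omega)), mul_zero]
  · rw [← mg_tsum h0 hq k hk, mul_assoc]
    congr 1
    exact tendsto_nhds_unique ((prod_tendsto hq).mul (me_tendsto hq k)) (main_tendsto h0 hq k)
end

section
/- For every integer k ≥ 1, the functions A_k satisfy the recurrence A_k(q) = (1/((2k+1)·2k)) · ( (6·A_1(q) + k(k−1))·A_{k−1}(q) − 2q·(d/dq)A_{k−1}(q) ) for all complex q with |q| < 1, where A_0(q) = 1 and the derivative is the complex derivative with respect to q. -/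
/-- MacMahon's generalized sum-of-divisors function `A_k(q)`, defined as the sum over all
strictly increasing `k`-tuples of positive integers.  For `k = 0` it equals `1`. -/
noncomputable def macA (k : ℕ) (q : ℂ) : ℂ :=
  ∑' m : {m : Fin k → ℕ // StrictMono m ∧ ∀ i, 0 < m i},
    q ^ (∑ i, m.1 i) / ∏ i, (1 - q ^ m.1 i) ^ 2

open Finset Filter Topology

/-- coefficients of the Chebyshev-like polynomials -/
noncomputable def ca (k : ℕ) (z : ℂ) : ℂ :=
  (2 * z + 1) * ∏ i ∈ range k, (((i : ℂ) * (i + 1) - z * (z + 1)) / ((2 * i + 2) * (2 * i + 3)))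

lemma ca_zero (z : ℂ) : ca 0 z = 2 * z + 1 := by simp [ca]

lemma den_ne (k : ℕ) : ((2 * (k : ℂ) + 2) * (2 * k + 3)) ≠ 0 := by
  have h1 : (2 * (k : ℂ) + 2) ≠ 0 := by
    have : ((2 * k + 2 : ℕ) : ℂ) ≠ 0 := Nat.cast_ne_zero.mpr (by omega)
    push_cast at this; exact this
  have h2 : (2 * (k : ℂ) + 3) ≠ 0 := by
    have : ((2 * k + 3 : ℕ) : ℂ) ≠ 0 := Nat.cast_ne_zero.mpr (by omega)
    push_cast at this; exact this
  exact mul_ne_zero h1 h2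

lemma ca_succ (k : ℕ) (z : ℂ) :
    ((2 * (k : ℂ) + 2) * (2 * k + 3)) * ca (k + 1) z = ((k : ℂ) * (k + 1) - z * (z + 1)) * ca k z := by
  have := den_ne k
  have h3 := right_ne_zero_of_mul this
  unfold ca
  rw [prod_range_succ]
  field_simp

noncomputable def cp (k : ℕ) (z : ℂ) : ℂ :=
  ∏ i ∈ range k, (((i : ℂ) * (i + 1) - z * (z + 1)) / ((2 * i + 2) * (2 * i + 3)))

lemma cp_add (k : ℕ) (z : ℂ) : ((2 * (k : ℂ) + 2) * (2 * k + 3)) * cp (k + 1) (z + 1) =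
    - (z + k + 2) * (z + k + 1) * cp k z := by
  induction k with
  | zero => simp [cp]; ring
  | succ k ih =>
    have h1 := den_ne k
    have h2 := den_ne (k+1)
    have e1 : cp (k+2) (z+1) = cp (k+1) (z+1) * ((((k+1:ℕ) : ℂ) * ((k+1:ℕ) + 1) - (z+1) * (z+1 + 1)) / ((2 * (k+1:ℕ) + 2) * (2 * (k+1:ℕ) + 3))) := by
      unfold cp; rw [prod_range_succ]
    have e2 : cp (k+1) z = cp k z * (((k : ℂ) * (k + 1) - z * (z + 1)) / ((2 * k + 2) * (2 * k + 3))) := by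
      unfold cp; rw [prod_range_succ]
    have e3 : cp (k+1) (z+1) = - (z + k + 2) * (z + k + 1) * cp k z / ((2 * (k : ℂ) + 2) * (2 * k + 3)) := by
      rw [← ih, mul_div_cancel_left₀ _ h1]
    rw [e1, e2, e3, mul_div_assoc', mul_div_cancel₀ _ h2]
    push_cast
    field_simp
    ring

lemma cp_sub (k : ℕ) (z : ℂ) : ((2 * (k : ℂ) + 2) * (2 * k + 3)) * cp (k + 1) (z - 1) =
    - (z - k) * (z - k - 1) * cp k z := by
  induction k with
  | zero => simp [cp]; ring
  | succ k ih =>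
    have h1 := den_ne k
    have h2 := den_ne (k+1)
    have e1 : cp (k+2) (z-1) = cp (k+1) (z-1) * ((((k+1:ℕ) : ℂ) * ((k+1:ℕ) + 1) - (z-1) * (z-1 + 1)) / ((2 * (k+1:ℕ) + 2) * (2 * (k+1:ℕ) + 3))) := by
      unfold cp; rw [prod_range_succ]
    have e2 : cp (k+1) z = cp k z * (((k : ℂ) * (k + 1) - z * (z + 1)) / ((2 * k + 2) * (2 * k + 3))) := by
      unfold cp; rw [prod_range_succ]
    have e3 : cp (k+1) (z-1) = - (z - k) * (z - k - 1) * cp k z / ((2 * (k : ℂ) + 2) * (2 * k + 3)) := by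
      rw [← ih, mul_div_cancel_left₀ _ h1]
    rw [e1, e2, e3, mul_div_assoc', mul_div_cancel₀ _ h2]
    push_cast
    field_simp
    ring

lemma ca_three (k : ℕ) (z : ℂ) : ca (k+1) (z+1) + ca (k+1) (z-1) = 2 * ca (k+1) z - ca k z := by
  have h := den_ne k
  have h1 := cp_add k z
  have h2 := cp_sub k z
  have h3 := ca_succ k z
  have e : ∀ k z, ca k z = (2 * z + 1) * cp k z := fun _ _ => rfl
  apply mul_left_cancel₀ h
  rw [mul_sub, mul_left_comm _ 2, h3, e, e, e]
  linear_combination (2*(z+1)+1) * h1 + (2*(z-1)+1) * h2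

lemma ca_three_zero (z : ℂ) : ca 0 (z+1) + ca 0 (z-1) = 2 * ca 0 z := by
  simp only [ca_zero]; ring

lemma ca_neg_one (k : ℕ) : ca k (-1) = - ca k 0 := by
  simp [ca]; ring_nf

lemma ca_at_zero (k : ℕ) : ca k 0 = if k = 0 then 1 else 0 := by
  cases k with
  | zero => simp [ca]
  | succ k => simp [ca, prod_range_succ']

/-- q-Pochhammer -/
noncomputable def Qp (q : ℂ) (n : ℕ) : ℂ := ∏ i ∈ range n, (1 - q ^ (i + 1))
noncomputable def ip (q : ℂ) : ℕ → ℂ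
  | 0 => 0
  | n + 1 => (Qp q n)⁻¹

lemma one_sub_ne {q : ℂ} (hq : ‖q‖ < 1) (n : ℕ) : 1 - q ^ (n + 1) ≠ 0 := by
  intro h
  have : ‖q ^ (n+1)‖ < 1 := by
    rw [norm_pow]; exact pow_lt_one₀ (norm_nonneg _) hq (by omega)
  rw [← sub_eq_zero.mp h] at this
  simp at this

lemma Qp_ne {q : ℂ} (hq : ‖q‖ < 1) (n : ℕ) : Qp q n ≠ 0 :=
  prod_ne_zero_iff.mpr fun i _ => one_sub_ne hq i

lemma Qp_succ (q : ℂ) (n : ℕ) : Qp q (n+1) = Qp q n * (1 - q ^ (n + 1)) := prod_range_succ _ _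

lemma ip_rec {q : ℂ} (hq : ‖q‖ < 1) (n : ℕ) : ip q n = (1 - q ^ n) * ip q (n + 1) := by
  cases n with
  | zero => simp [ip]
  | succ n =>
    have := one_sub_ne hq n
    have := Qp_ne hq n
    simp only [ip, Qp_succ]; field_simp

noncomputable def cc (q : ℂ) (N j : ℕ) : ℂ :=
  (-1) ^ j * q ^ (j * (j + 1) / 2) * (Qp q (2 * N + 1) * ip q (N + 1 - j) * ip q (N + 2 + j))

lemma tri_succ (j : ℕ) : (j + 1) * (j + 1 + 1) / 2 = j * (j + 1) / 2 + (j + 1) := by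
  rw [show (j + 1) * (j + 1 + 1) = j * (j + 1) + (j + 1) * 2 by ring]
  exact Nat.add_mul_div_right _ _ (by norm_num)

lemma cc_eq_zero (q : ℂ) {N j : ℕ} (h : N < j) : cc q N j = 0 := by
  have : N + 1 - j = 0 := by omega
  simp [cc, this, ip]

lemma cc_zero {q : ℂ} (hq : ‖q‖ < 1) (N : ℕ) : cc q (N + 1) 0 =
    (1 + (q ^ (N+1)) ^ 2 + q ^ (N+1)) * cc q N 0 - q ^ (N+1) * cc q N 1 := by
  unfold cc
  have a1 := ip_rec hq N
  have a2 := ip_rec hq (N+1)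
  have a3 := ip_rec hq (N+2)
  rw [show 2 * (N + 1) + 1 = 2 * N + 1 + 1 + 1 by ring, Qp_succ, Qp_succ]
  simp only [Nat.add_sub_cancel, Nat.sub_zero, show N + 1 + 1 = N + 2 by ring,
    show N + 1 + 2 = N + 3 by ring] at *
  rw [a1, a2, a3]
  norm_num
  ring

lemma cc_succ {q : ℂ} (hq : ‖q‖ < 1) (N j : ℕ) : cc q (N + 1) (j + 1) =
    (1 + (q ^ (N+1)) ^ 2) * cc q N (j + 1) - q ^ (N+1) * (cc q N j + cc q N (j + 2)) := by
  rcases lt_or_ge N j with h | h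
  · simp [cc_eq_zero q h, cc_eq_zero q (show N + 1 < j + 1 by omega),
      cc_eq_zero q (show N < j + 1 by omega), cc_eq_zero q (show N < j + 2 by omega)]
  obtain ⟨m, rfl⟩ := Nat.exists_eq_add_of_le h
  unfold cc
  rw [tri_succ (j + 1), tri_succ j]
  generalize j * (j + 1) / 2 = t
  rw [show 2 * (j + m + 1) + 1 = 2 * (j + m) + 1 + 1 + 1 by ring, Qp_succ, Qp_succ]
  rw [show j + m + 1 + 1 - (j + 1) = m + 1 by omega, show j + m + 1 - (j + 1) = m by omega,
    show j + m + 1 - j = m + 1 by omega, show j + m + 1 - (j + 2) = m - 1 by omega,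
    show j + m + 1 + 2 + (j + 1) = 2 * j + m + 4 by omega, show j + m + 2 + (j + 1) = 2 * j + m + 3 by omega,
    show j + m + 2 + j = 2 * j + m + 2 by omega, show j + m + 2 + (j + 2) = 2 * j + m + 4 by omega]
  have a1 := ip_rec hq m
  have a3 := ip_rec hq (2 * j + m + 2)
  have a4 := ip_rec hq (2 * j + m + 3)
  rw [a3, a4]
  cases m with
  | zero => simp [ip]; ring
  | succ m =>
    have a2 := ip_rec hq m
    rw [Nat.add_sub_cancel, a2, a1]
    ring

noncomputable def Tp (q : ℂ) (k N : ℕ) : ℂ := ∑ j ∈ range (N + 1), cc q N j * ca k j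

lemma Tp_ext (q : ℂ) (k N M : ℕ) (h : N < M) : Tp q k N = ∑ j ∈ range M, cc q N j * ca k j := by
  unfold Tp
  apply sum_subset
  · intro x; simp; omega
  · intro x _ hx
    simp at hx
    rw [cc_eq_zero q (by omega), zero_mul]

lemma Tp_rec {q : ℂ} (hq : ‖q‖ < 1) (k N : ℕ) : Tp q k (N + 1) =
    ∑ j ∈ range (N + 1), cc q N j *
      ((1 + (q ^ (N+1)) ^ 2) * ca k j - q ^ (N+1) * (ca k (j + 1) + ca k (j - 1))) := by
  have h1 : Tp q k (N+1) = ∑ j ∈ range (N + 1), cc q (N+1) (j+1) * ca k (j + 1) + cc q (N+1) 0 * ca k 0 := by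
    unfold Tp; rw [sum_range_succ']; simp
  have h2 : ∑ j ∈ range (N + 1), cc q N j * ca k j =
      ∑ j ∈ range (N + 1), cc q N (j+1) * ca k (j+1) + cc q N 0 * ca k 0 := by
    have := Tp_ext q k N (N+2) (by omega)
    rw [sum_range_succ'] at this
    simpa [Tp] using this
  have h3 : ∑ j ∈ range (N + 1), cc q N j * ca k (j - 1) =
      ∑ j ∈ range (N + 1), cc q N (j+1) * ca k j - cc q N 0 * ca k 0 := by
    rw [sum_range_succ', sum_range_succ, cc_eq_zero q (show N < N + 1 by omega)]
    simp [ca_neg_one]; ring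
  have h4 : ∑ j ∈ range (N + 1), cc q N (j+1) * ca k j =
      ∑ j ∈ range (N + 1), cc q N (j+2) * ca k (j+1) + cc q N 1 * ca k 0 := by
    rw [sum_range_succ', ]
    rw [sum_range_succ _ N, cc_eq_zero q (show N < N + 2 by omega)]
    simp
  have h5 : ∑ j ∈ range (N + 1), cc q N j *
      ((1 + (q ^ (N+1)) ^ 2) * ca k j - q ^ (N+1) * (ca k (j + 1) + ca k (j - 1))) =
      (1 + (q ^ (N+1)) ^ 2) * ∑ j ∈ range (N + 1), cc q N j * ca k j
       - q ^ (N+1) * (∑ j ∈ range (N + 1), cc q N j * ca k (j+1)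
        + ∑ j ∈ range (N + 1), cc q N j * ca k (j-1)) := by
    simp only [mul_sum, ← sum_add_distrib, ← sum_sub_distrib]
    exact sum_congr rfl fun _ _ => by ring
  rw [h5, h3, h4, h2, h1, cc_zero hq]
  simp only [cc_succ hq]
  have h6 : ∑ j ∈ range (N + 1), ((1 + (q ^ (N+1)) ^ 2) * cc q N (j + 1) - q ^ (N+1) * (cc q N j + cc q N (j + 2))) * ca k (j+1)
     = (1 + (q ^ (N+1)) ^ 2) * ∑ j ∈ range (N + 1), cc q N (j+1) * ca k (j+1)
      - q ^ (N+1) * (∑ j ∈ range (N + 1), cc q N j * ca k (j+1)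
        + ∑ j ∈ range (N + 1), cc q N (j+2) * ca k (j+1)) := by
    simp only [mul_sum, ← sum_add_distrib, ← sum_sub_distrib]
    exact sum_congr rfl fun _ _ => by ring
  rw [h6]
  ring

lemma Tp_succ {q : ℂ} (hq : ‖q‖ < 1) (k N : ℕ) : Tp q (k + 1) (N + 1) =
    (1 - q ^ (N+1)) ^ 2 * Tp q (k + 1) N + q ^ (N+1) * Tp q k N := by
  rw [Tp_rec hq]
  simp only [ca_three, Tp, mul_sum, ← sum_add_distrib]
  exact sum_congr rfl fun _ _ => by ring

lemma Tp_zero {q : ℂ} (hq : ‖q‖ < 1) (N : ℕ) : Tp q 0 (N + 1) =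
    (1 - q ^ (N+1)) ^ 2 * Tp q 0 N := by
  rw [Tp_rec hq]
  simp only [ca_three_zero, Tp, mul_sum]
  exact sum_congr rfl fun _ _ => by ring

noncomputable def xx (q : ℂ) (n : ℕ) : ℂ := q ^ n / (1 - q ^ n) ^ 2

noncomputable def Ep (q : ℂ) (k N : ℕ) : ℂ :=
  ∑ s ∈ powersetCard k (range (N + 1)), ∏ i ∈ s, xx q i

lemma Ep_zero (q : ℂ) (N : ℕ) : Ep q 0 N = 1 := by simp [Ep]

lemma Ep_succ (q : ℂ) (k N : ℕ) : Ep q (k + 1) (N + 1) =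
    Ep q (k + 1) N + xx q (N + 1) * Ep q k N := by
  unfold Ep
  rw [range_add_one (n := N + 1), powersetCard_succ_insert (by simp), sum_union, sum_image, mul_sum]
  · congr 1
    refine sum_congr rfl fun s hs => ?_
    rw [prod_insert]
    intro h
    have := (mem_powersetCard.mp hs).1 h
    simp at this
  · intro s hs t ht h
    have hs' : N + 1 ∉ s := fun h => by
      have := (mem_powersetCard.mp hs).1 h
      simp at this
    have ht' : N + 1 ∉ t := fun h => by
      have := (mem_powersetCard.mp ht).1 h
      simp at this
    replace h : insert (N + 1) s = insert (N + 1) t := h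
    rw [← erase_insert hs', h, erase_insert ht']
  · rw [Finset.disjoint_left]
    intro s hs hs2
    obtain ⟨t, _, rfl⟩ := mem_image.mp hs2
    have := (mem_powersetCard.mp hs).1 (mem_insert_self _ _)
    simp at this

lemma Ep_base (q : ℂ) (k : ℕ) : Ep q (k+1) 0 = 0 := by
  unfold Ep
  apply sum_eq_zero
  intro s hs
  obtain ⟨h1, h2⟩ := mem_powersetCard.mp hs
  have : s.Nonempty := card_pos.mp (by omega)
  obtain ⟨i, hi⟩ := this
  apply prod_eq_zero hi
  have := h1 hi
  simp at this
  subst this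
  simp [xx]

lemma Ep_Tp {q : ℂ} (hq : ‖q‖ < 1) (N : ℕ) : ∀ k, (Qp q N) ^ 2 * Ep q k N = Tp q k N := by
  induction N with
  | zero =>
    have h := one_sub_ne hq 0
    have : ∀ k, Tp q k 0 = ca k 0 := fun k => by
      simp [Tp, cc, ip, Qp]
      simp at h
      field_simp
    intro k
    rw [this, ca_at_zero]
    cases k with
    | zero => simp [Ep_zero, Qp]
    | succ k => simp [Ep_base]
  | succ N ih =>
    intro k
    have h := one_sub_ne hq N
    rw [Qp_succ]
    cases k with
    | zero =>
      rw [Tp_zero hq, ← ih, Ep_zero, Ep_zero]; ring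
    | succ k =>
      rw [Tp_succ hq, ← ih, ← ih, Ep_succ, xx]; field_simp

lemma xx_summable {q : ℂ} (hq : ‖q‖ < 1) : Summable fun n => ‖xx q n‖ := by
  have hb : ∀ n, ‖xx q n‖ ≤ (1 / (1 - ‖q‖) ^ 2) * ‖q‖ ^ n := by
    intro n
    cases n with
    | zero => simp [xx]; positivity
    | succ n =>
      have h0 : 0 < 1 - ‖q‖ := by linarith
      have h1 : 1 - ‖q‖ ≤ ‖1 - q ^ (n + 1)‖ := by
        have h2 := norm_sub_norm_le (1 : ℂ) (q ^ (n+1))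
        have h3 : ‖q‖ ^ (n + 1) ≤ ‖q‖ := pow_le_of_le_one (norm_nonneg _) hq.le (by omega)
        rw [norm_one, norm_pow] at h2
        linarith
      rw [xx, norm_div, norm_pow, norm_pow, div_mul_eq_mul_div, one_mul]
      gcongr
  exact Summable.of_nonneg_of_le (fun _ => norm_nonneg _) hb
    ((summable_geometric_of_lt_one (norm_nonneg _) hq).mul_left _)

lemma Ep_tendsto {q : ℂ} (hq : ‖q‖ < 1) (k : ℕ) : Tendsto (Ep q k) atTop (𝓝 (macA k q)) := by
  classical
  set f : Finset ℕ → ℂ := fun s => if s.card = k then ∏ i ∈ s, xx q i else 0 with hf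
  have hsum : Summable f := by
    have h := summable_finsetProd_of_summable_norm (f := xx q) (xx_summable hq)
    have h2 : Summable fun s : Finset ℕ => ‖∏ i ∈ s, xx q i‖ := h.norm
    refine Summable.of_norm_bounded h2 fun s => ?_
    simp only [hf]
    split_ifs
    · exact le_rfl
    · rw [norm_zero]; exact norm_nonneg _
  set g : {m : Fin k → ℕ // StrictMono m ∧ ∀ i, 0 < m i} → Finset ℕ := fun m => univ.image m.1 with hg
  have ginj : Function.Injective g := by
    intro m n h
    apply Subtype.ext
    apply (m.2.1.range_inj n.2.1).mp
    have : ((g m : Finset ℕ) : Set ℕ) = (g n : Finset ℕ) := by rw [h]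
    simpa [hg] using this
  have hfg : ∀ m, f (g m) = q ^ (∑ i, m.1 i) / ∏ i, (1 - q ^ m.1 i) ^ 2 := by
    intro m
    have hi := m.2.1.injective
    simp only [hf, hg]
    rw [card_image_of_injective _ hi, prod_image (fun _ _ _ _ h => hi h)]
    simp [xx, prod_div_distrib, prod_pow_eq_pow_sum]
  have hout : ∀ s, s ∉ Set.range g → f s = 0 := by
    intro s hs
    simp only [hf]
    split_ifs with hc
    · by_cases h0 : 0 ∈ s
      · exact prod_eq_zero h0 (by simp [xx])
      · exfalso
        apply hs
        refine ⟨⟨s.orderEmbOfFin hc, (s.orderEmbOfFin hc).strictMono, fun i => ?_⟩, ?_⟩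
        · have := s.orderEmbOfFin_mem hc i
          rcases Nat.eq_zero_or_pos (s.orderEmbOfFin hc i) with h | h
          · rw [h] at this; exact absurd this h0
          · exact h
        · simp [hg]
    · rfl
  have hmac : macA k q = ∑' s, f s := by
    rw [macA, ← ginj.tsum_eq (f := f)]
    · exact tsum_congr fun m => (hfg m).symm
    · intro s hs
      by_contra h
      exact hs (hout s h)
  rw [hmac]
  have ht : Tendsto (fun N => (range (N + 1)).powerset) atTop (atTop : Filter (Finset (Finset ℕ))) := by
    apply tendsto_atTop_finset_of_monotone
    · intro a b h
      exact powerset_mono.mpr (range_mono (by omega))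
    · intro s
      refine ⟨s.sup id, ?_⟩
      rw [mem_powerset]
      intro i hi
      have : i ≤ s.sup id := Finset.le_sup (f := id) hi
      simp; omega
  refine (hsum.hasSum.comp ht).congr fun N => ?_
  simp only [Function.comp, Ep, hf, powersetCard_eq_filter, sum_filter]

lemma Qp_tendsto {q : ℂ} (hq : ‖q‖ < 1) : ∃ P : ℂ, P ≠ 0 ∧ Tendsto (Qp q) atTop (𝓝 P) := by
  have h1 : Summable fun n : ℕ => ‖-q ^ (n + 1)‖ := by
    simp only [norm_neg, norm_pow]
    exact (summable_nat_add_iff 1).mpr (summable_geometric_of_lt_one (norm_nonneg _) hq)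
  have h2 : Summable fun n : ℕ => ‖q ^ (n + 1) / (1 - q ^ (n + 1))‖ := by
    refine Summable.of_nonneg_of_le (fun _ => norm_nonneg _) (fun n => ?_)
      (h1.mul_left (1 / (1 - ‖q‖)))
    have h0 : 0 < 1 - ‖q‖ := by linarith
    have h1 : 1 - ‖q‖ ≤ ‖1 - q ^ (n + 1)‖ := by
      have h2 := norm_sub_norm_le (1 : ℂ) (q ^ (n+1))
      have h3 : ‖q‖ ^ (n + 1) ≤ ‖q‖ := pow_le_of_le_one (norm_nonneg _) hq.le (by omega)
      rw [norm_one, norm_pow] at h2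
      linarith
    rw [norm_neg, norm_div, norm_pow, div_mul_eq_mul_div, one_mul]
    gcongr
  have m1 := (multipliable_one_add_of_summable h1).tendsto_prod_tprod_nat
  have m2 := (multipliable_one_add_of_summable h2).tendsto_prod_tprod_nat
  have e : ∀ n, (∏ i ∈ range n, (1 + -q ^ (i + 1))) *
      (∏ i ∈ range n, (1 + q ^ (i + 1) / (1 - q ^ (i + 1)))) = 1 := by
    intro n
    rw [← prod_mul_distrib]
    apply prod_eq_one
    intro i _
    have := one_sub_ne hq i
    field_simp
    ring
  have m3 := m1.mul m2
  simp only [e] at m3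
  have := tendsto_nhds_unique m3 tendsto_const_nhds
  refine ⟨_, left_ne_zero_of_mul (this.trans_ne one_ne_zero), m1.congr fun n => ?_⟩
  simp [Qp, sub_eq_add_neg]

/-- polynomial bound -/
lemma ca_bound (k : ℕ) : ∃ C : ℝ, 0 ≤ C ∧ ∀ j : ℕ, ‖ca k j‖ ≤ C * ((j : ℝ) + 1) ^ (2 * k + 1) := by
  induction k with
  | zero =>
    refine ⟨2, by norm_num, fun j => ?_⟩
    rw [ca_zero]
    have : (2 * (j : ℂ) + 1) = ((2 * j + 1 : ℕ) : ℂ) := by push_cast; ring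
    rw [this, Complex.norm_natCast]
    push_cast; simp; linarith
  | succ k ih =>
    obtain ⟨C, hC, h⟩ := ih
    refine ⟨((k : ℝ) * (k + 1) + 1) * C, by positivity, fun j => ?_⟩
    have h1 := ca_succ k j
    have h2 : ca (k+1) j = ((k : ℂ) * (k + 1) - j * (j + 1)) * ca k j / ((2 * (k : ℂ) + 2) * (2 * k + 3)) := by
      rw [← h1, mul_div_cancel_left₀ _ (den_ne k)]
    have h3 : (1 : ℝ) ≤ ‖((2 * (k : ℂ) + 2) * (2 * k + 3))‖ := by
      have : ((2 * (k : ℂ) + 2) * (2 * k + 3)) = (((2 * k + 2) * (2 * k + 3) : ℕ) : ℂ) := by push_cast; ring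
      rw [this, Complex.norm_natCast]
      exact_mod_cast Nat.mul_pos (by omega) (by omega)
    have h4 : ‖((k : ℂ) * (k + 1) - j * (j + 1))‖ ≤ ((k : ℝ) * (k + 1) + 1) * ((j : ℝ) + 1) ^ 2 := by
      have e1 : ((k : ℂ) * (k + 1)) = ((k * (k + 1) : ℕ) : ℂ) := by push_cast; ring
      have e2 : ((j : ℂ) * (j + 1)) = ((j * (j + 1) : ℕ) : ℂ) := by push_cast; ring
      refine (norm_sub_le _ _).trans ?_
      rw [e1, e2, Complex.norm_natCast, Complex.norm_natCast]
      push_cast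
      have : (0 : ℝ) ≤ j := by positivity
      have : (0 : ℝ) ≤ k := by positivity
      have : (0:ℝ) ≤ (k * (k+1)) * (j * (j + 2)) := by positivity
      nlinarith
    rw [h2, norm_div, norm_mul]
    calc _ ≤ ‖((k : ℂ) * (k + 1) - j * (j + 1))‖ * ‖ca k j‖ := div_le_self (by positivity) h3
      _ ≤ (((k : ℝ) * (k + 1) + 1) * ((j : ℝ) + 1) ^ 2) * (C * ((j : ℝ) + 1) ^ (2 * k + 1)) := by
        gcongr; exact h j
      _ = _ := by ring

lemma le_tri (j : ℕ) : j ≤ j * (j + 1) / 2 := by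
  rw [Nat.le_div_iff_mul_le (by norm_num)]
  rcases Nat.eq_zero_or_pos j with h | h
  · simp [h]
  · exact Nat.mul_le_mul_left _ (by omega)

lemma ca_summable (k : ℕ) {r : ℝ} (h0 : 0 ≤ r) (h1 : r < 1) :
    Summable fun j : ℕ => r ^ (j * (j + 1) / 2) * ‖ca k j‖ := by
  obtain ⟨C, hC, h⟩ := ca_bound k
  rcases h0.eq_or_lt with rfl | hr
  · apply summable_of_ne_finset_zero (s := {0})
    intro j hj
    have := le_tri j
    have h2 : j ≠ 0 := by simpa using hj
    rw [zero_pow (by omega), zero_mul]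
  have hs : Summable fun j : ℕ => ((j : ℝ)) ^ (2 * k + 1) * r ^ j :=
    summable_pow_mul_geometric_of_norm_lt_one _ (by rwa [Real.norm_of_nonneg h0])
  have hs2 := ((summable_nat_add_iff 1).mpr hs).mul_left (C * r⁻¹)
  refine Summable.of_nonneg_of_le (fun _ => by positivity) (fun j => ?_) hs2
  calc r ^ (j * (j + 1) / 2) * ‖ca k j‖ ≤ r ^ j * (C * ((j : ℝ) + 1) ^ (2 * k + 1)) := by
        gcongr ?_ * ?_
        · exact pow_le_pow_of_le_one h0 h1.le (le_tri j)
        · exact h j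
    _ = _ := by
      push_cast
      rw [pow_succ r j]
      field_simp

noncomputable def SS (k : ℕ) (q : ℂ) : ℂ := ∑' j : ℕ, (-1) ^ j * q ^ (j * (j + 1) / 2) * ca k j

lemma SS_term_norm (k : ℕ) (q : ℂ) (j : ℕ) :
    ‖(-1) ^ j * q ^ (j * (j + 1) / 2) * ca k j‖ = ‖q‖ ^ (j * (j + 1) / 2) * ‖ca k j‖ := by
  simp

lemma SS_summable (k : ℕ) {q : ℂ} (hq : ‖q‖ < 1) :
    Summable fun j : ℕ => (-1) ^ j * q ^ (j * (j + 1) / 2) * ca k j :=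
  Summable.of_norm_bounded (ca_summable k (norm_nonneg q) hq) fun j => (SS_term_norm k q j).le

lemma SS_deriv (k : ℕ) {q : ℂ} (hq : ‖q‖ < 1) : DifferentiableAt ℂ (SS k) q ∧
    ((2 * (k : ℂ) + 2) * (2 * k + 3)) * SS (k + 1) q = k * (k + 1) * SS k q - 2 * q * deriv (SS k) q := by
  obtain ⟨r, hr1, hr2⟩ := exists_between hq
  have hr0 : 0 ≤ r := (norm_nonneg q).trans hr1.le
  have hu := ca_summable k hr0 hr2
  have hd : ∀ j : ℕ, DifferentiableOn ℂ (fun w : ℂ => (-1) ^ j * w ^ (j * (j + 1) / 2) * ca k j)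
      (Metric.ball 0 r) := fun j => by fun_prop
  have hb : ∀ (j : ℕ) (w : ℂ), w ∈ Metric.ball (0 : ℂ) r →
      ‖(-1) ^ j * w ^ (j * (j + 1) / 2) * ca k j‖ ≤ r ^ (j * (j + 1) / 2) * ‖ca k j‖ := by
    intro j w hw
    rw [SS_term_norm]
    have : ‖w‖ < r := by simpa using hw
    gcongr
  have hz : q ∈ Metric.ball (0 : ℂ) r := by simpa using hr1
  have h1 := Complex.differentiableOn_tsum_of_summable_norm hu hd Metric.isOpen_ball hb
  have h2 := Complex.hasSum_deriv_of_summable_norm hu hd Metric.isOpen_ball hb hz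
  refine ⟨h1.differentiableAt (Metric.isOpen_ball.mem_nhds hz), ?_⟩
  change HasSum _ (deriv (SS k) q) at h2
  have h3 := ((SS_summable k hq).hasSum.mul_left ((k : ℂ) * (k + 1))).sub (h2.mul_left (2 * q))
  have h4 := (SS_summable (k+1) hq).hasSum.mul_left ((2 * (k : ℂ) + 2) * (2 * k + 3))
  refine h4.unique ?_
  refine Eq.mp (congrArg (fun f => HasSum f _) (funext fun j => ?_)) h3
  symm
  have hdj : deriv (fun w : ℂ => (-1) ^ j * w ^ (j * (j + 1) / 2) * ca k j) q
      = (-1) ^ j * (((j * (j + 1) / 2 : ℕ) : ℂ) * q ^ (j * (j + 1) / 2 - 1)) * ca k j := by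
    simp
  rw [hdj]
  have ht : 2 * ((j * (j + 1) / 2 : ℕ) : ℂ) = j * (j + 1) := by
    have : 2 * (j * (j + 1) / 2) = j * (j + 1) := Nat.mul_div_cancel' (Nat.even_mul_succ_self j).two_dvd
    exact_mod_cast this
  have hp : ((j * (j + 1) / 2 : ℕ) : ℂ) * (q * q ^ (j * (j + 1) / 2 - 1))
      = ((j * (j + 1) / 2 : ℕ) : ℂ) * q ^ (j * (j + 1) / 2) := by
    rcases Nat.eq_zero_or_pos (j * (j + 1) / 2) with h | h
    · simp [h]
    · rw [← pow_succ', Nat.sub_add_cancel h]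
  have hc := ca_succ k j
  linear_combination ((-1) ^ j * q ^ (j * (j + 1) / 2)) * hc + 2 * (-1) ^ j * ca k j * hp
    + (-1) ^ j * ca k j * q ^ (j * (j + 1) / 2) * ht

lemma ip_tendsto {q : ℂ} {P : ℂ} (hP : P ≠ 0) (h : Tendsto (Qp q) atTop (𝓝 P)) :
    Tendsto (ip q) atTop (𝓝 P⁻¹) := by
  rw [← tendsto_add_atTop_iff_nat 1]
  exact h.inv₀ hP

lemma tendsto_bdd {f : ℕ → ℂ} {l : ℂ} (h : Tendsto f atTop (𝓝 l)) : ∃ C, 0 ≤ C ∧ ∀ n, ‖f n‖ ≤ C := by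
  obtain ⟨C, hC⟩ := (Metric.isBounded_range_of_tendsto f h).exists_norm_le
  exact ⟨C, (norm_nonneg _).trans (hC _ ⟨0, rfl⟩), fun n => hC _ ⟨n, rfl⟩⟩

lemma Tp_tendsto {q : ℂ} (hq : ‖q‖ < 1) {P : ℂ} (hP : P ≠ 0) (h : Tendsto (Qp q) atTop (𝓝 P))
    (k : ℕ) : Tendsto (Tp q k) atTop (𝓝 (P⁻¹ * SS k q)) := by
  have hi := ip_tendsto hP h
  obtain ⟨C, hC, hCb⟩ := tendsto_bdd h
  obtain ⟨D, hD, hDb⟩ := tendsto_bdd hi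
  have hT : ∀ N, Tp q k N = ∑' j : ℕ, cc q N j * ca k j := by
    intro N
    rw [tsum_eq_sum (s := range (N + 1))]
    · rfl
    · intro j hj
      rw [cc_eq_zero q (by simpa using hj), zero_mul]
  have hS : P⁻¹ * SS k q = ∑' j : ℕ, P⁻¹ * ((-1) ^ j * q ^ (j * (j + 1) / 2) * ca k j) := by
    rw [tsum_mul_left]; rfl
  rw [hS, funext hT]
  refine tendsto_tsum_of_dominated_convergence
    ((ca_summable k (norm_nonneg q) hq).mul_left (C * D * D)) (fun j => ?_)
    (Eventually.of_forall fun N j => ?_)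
  · have l1 : Tendsto (fun N : ℕ => 2 * N + 1) atTop atTop :=
      tendsto_atTop_mono (fun N => by simp only [id]; omega) tendsto_id
    have l2 : Tendsto (fun N : ℕ => N + 1 - j) atTop atTop :=
      (tendsto_sub_atTop_nat j).comp (tendsto_add_atTop_nat 1)
    have l3 : Tendsto (fun N : ℕ => N + 2 + j) atTop atTop :=
      tendsto_atTop_mono (fun N => by simp only [id]; omega) tendsto_id
    have := ((((h.comp l1).mul (hi.comp l2)).mul (hi.comp l3)).const_mul
      ((-1) ^ j * q ^ (j * (j + 1) / 2))).mul_const (ca k j)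
    rw [show P⁻¹ * ((-1) ^ j * q ^ (j * (j + 1) / 2) * ca k j) =
      (-1) ^ j * q ^ (j * (j + 1) / 2) * (P * P⁻¹ * P⁻¹) * ca k j by
        rw [mul_inv_cancel₀ hP]; ring]
    exact this
  · rw [cc, norm_mul, norm_mul]
    have e1 : ‖(-1) ^ j * q ^ (j * (j + 1) / 2)‖ = ‖q‖ ^ (j * (j + 1) / 2) := by simp
    rw [e1, norm_mul, norm_mul]
    calc _ ≤ ‖q‖ ^ (j * (j + 1) / 2) * (C * D * D) * ‖ca k j‖ := by
          gcongr
          · exact hCb _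
          · exact hDb _
          · exact hDb _
      _ = _ := by ring

lemma macA_zero (q : ℂ) (hq : ‖q‖ < 1) : macA 0 q = 1 := by
  refine tendsto_nhds_unique (Ep_tendsto hq 0) ?_
  rw [funext (Ep_zero q)]
  exact tendsto_const_nhds

lemma SS_macA {q : ℂ} (hq : ‖q‖ < 1) : SS 0 q ≠ 0 ∧ ∀ k, SS k q = SS 0 q * macA k q := by
  obtain ⟨P, hP, h⟩ := Qp_tendsto hq
  have key : ∀ k, SS k q = P ^ 3 * macA k q := by
    intro k
    have h1 := (h.pow 2).mul (Ep_tendsto hq k)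
    have h2 := Tp_tendsto hq hP h k
    have h3 := tendsto_nhds_unique (h1.congr fun N => Ep_Tp hq N k) h2
    field_simp at h3
    rw [← h3]
  have h0 : SS 0 q = P ^ 3 := by rw [key, macA_zero q hq, mul_one]
  rw [h0]
  exact ⟨pow_ne_zero _ hP, key⟩

theorem stmt4 (k : ℕ) (hk : 1 ≤ k) (q : ℂ) (hq : ‖q‖ < 1) :
    macA k q = (1 / ((2 * (k : ℂ) + 1) * (2 * k))) *
      ((6 * macA 1 q + (k : ℂ) * ((k : ℂ) - 1)) * macA (k - 1) q
        - 2 * q * deriv (macA (k - 1)) q) := by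
  obtain ⟨k, rfl⟩ := Nat.exists_eq_add_of_le' hk
  rw [Nat.add_sub_cancel]
  obtain ⟨hne, hS⟩ := SS_macA hq
  obtain ⟨hd0, hr0⟩ := SS_deriv 0 hq
  obtain ⟨hd, hr⟩ := SS_deriv k hq
  have hev : SS k =ᶠ[𝓝 q] fun w => SS 0 w * macA k w := by
    filter_upwards [(isOpen_lt continuous_norm continuous_const).mem_nhds hq] with w hw
    exact (SS_macA hw).2 k
  have hev2 : macA k =ᶠ[𝓝 q] fun w => SS k w / SS 0 w := by
    filter_upwards [(isOpen_lt continuous_norm continuous_const).mem_nhds hq] with w hw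
    rw [(SS_macA hw).2 k, mul_div_cancel_left₀ _ (SS_macA hw).1]
  have hdm : DifferentiableAt ℂ (macA k) q := (hd.div hd0 hne).congr_of_eventuallyEq hev2
  have hder : deriv (SS k) q = deriv (SS 0) q * macA k q + SS 0 q * deriv (macA k) q := by
    rw [hev.deriv_eq]
    exact deriv_fun_mul hd0 hdm
  rw [hder, hS k, hS (k + 1)] at hr
  rw [show 0 + 1 = 1 from rfl, hS 1] at hr0
  have h2 := den_ne k
  have h3 : (2 * ((k + 1 : ℕ) : ℂ) + 1) * (2 * ((k + 1 : ℕ) : ℂ)) = (2 * (k : ℂ) + 2) * (2 * k + 3) := by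
    push_cast; ring
  rw [h3, one_div, eq_inv_mul_iff_mul_eq₀ h2]
  apply mul_left_cancel₀ hne
  push_cast at hr0 ⊢
  linear_combination hr - macA k q * hr0
end
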